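/- arXiv:2602.05304 — 2 statements merged into one kernel-verified Lean document; each statement's English description precedes it below -/
import Mathlib

section
/- Fix integers τ ≥ 1 and K > τ + 1, and set α = 1/(16 L τ). If the sampling sequence has staleness bounded by τ up to horizon K and f is μ-strongly convex (μ > 0), then the SAGA Lyapunov function satisfies V_{k+1} ≤ (1 − αμ/4)·V_k for every k with τ ≤ k ≤ K−2. -/
open scoped RealInnerProductSpace

/-!
By `L`-smoothness every stored gradient is off by at most `L` times the distance travelled within
the last `τ` steps, so the SAGA direction differs from the true gradient by at most `2Lα` times the
sum of the last `τ` direction norms. A descent step driven by such a direction loses at most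
`2L²α³τ · Σ_{j ≤ τ} ‖g_{k-j}‖²` compared with exact gradient descent. The weights `τ - j + 1` in the
Lyapunov function decrease by one per step, which releases `Lα² · Σ_{j ≤ τ} ‖g_{k-j}‖²` to pay for
this loss, at the cost of a term `Lα²τ‖g_k‖²` which the descent inequality absorbs. As soon as
`3Lατ ≤ 1` everything balances with contraction factor `1 - αμ`, where convexity enters only through
the Polyak–Łojasiewicz inequality and `μ ≤ L`.
-/

section Smooth

variable {E : Type*} [NormedAddCommGroup E] [InnerProductSpace ℝ E] [CompleteSpace E]
  {f : E → ℝ} {L μ : ℝ}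

/-- `L`-smoothness: `f` is differentiable and its gradient is `L`-Lipschitz. The constant is a real
number with no sign condition. -/
structure IsLSmooth (L : ℝ) (f : E → ℝ) : Prop where
  differentiable : Differentiable ℝ f
  norm_gradient_sub_le : ∀ x y, ‖gradient f x - gradient f y‖ ≤ L * ‖x - y‖

/-- The Polyak–Łojasiewicz inequality with constant `μ`, measuring suboptimality relative to the
value `c`, which in applications is the minimum of `f`. -/
def PolyakLojasiewicz (μ c : ℝ) (f : E → ℝ) : Prop :=
  ∀ y, 2 * μ * (f y - c) ≤ ‖gradient f y‖ ^ 2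

lemma hasDerivAt_comp_add_smul (hf : Differentiable ℝ f) (x v : E) (t : ℝ) :
    HasDerivAt (fun s : ℝ => f (x + s • v)) ⟪gradient f (x + t • v), v⟫ t := by
  have hline : HasDerivAt (fun s : ℝ => x + s • v) v t := by
    simpa using ((hasDerivAt_id t).smul_const v).const_add x
  exact (hf (x + t • v)).hasGradientAt.hasFDerivAt.comp_hasDerivAt t hline

namespace IsLSmooth

lemma inner_gradient_add_smul_le (hf : IsLSmooth L f) (x v : E) {t : ℝ} (ht : 0 ≤ t) :
    ⟪gradient f (x + t • v), v⟫ ≤ ⟪gradient f x, v⟫ + L * t * ‖v‖ ^ 2 := by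
  have hinner : ⟪gradient f (x + t • v) - gradient f x, v⟫ ≤ L * t * ‖v‖ ^ 2 :=
    calc ⟪gradient f (x + t • v) - gradient f x, v⟫
        ≤ ‖gradient f (x + t • v) - gradient f x‖ * ‖v‖ := real_inner_le_norm _ _
      _ ≤ L * ‖x + t • v - x‖ * ‖v‖ := by gcongr; exact hf.norm_gradient_sub_le _ _
      _ = L * t * ‖v‖ ^ 2 := by
        rw [add_sub_cancel_left, norm_smul, Real.norm_of_nonneg ht]; ring
  rw [inner_sub_left] at hinner
  linarith

lemma apply_add_le (hf : IsLSmooth L f) (x v : E) :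
    f (x + v) ≤ f x + ⟪gradient f x, v⟫ + L / 2 * ‖v‖ ^ 2 := by
  have hbound (t : ℝ) : HasDerivAt
      (fun s : ℝ => f x + s * ⟪gradient f x, v⟫ + s ^ 2 * (L / 2 * ‖v‖ ^ 2))
      (⟪gradient f x, v⟫ + L * t * ‖v‖ ^ 2) t := by
    have hlin := ((hasDerivAt_id t).mul_const ⟪gradient f x, v⟫).const_add (f x)
    have hquad := (hasDerivAt_pow 2 t).mul_const (L / 2 * ‖v‖ ^ 2)
    exact (hlin.add hquad).congr_deriv (by push_cast; ring)
  have hline := hasDerivAt_comp_add_smul hf.differentiable x v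
  have hle := image_le_of_deriv_right_le_deriv_boundary (a := 0) (b := 1)
    (fun t _ => (hline t).continuousAt.continuousWithinAt)
    (fun t _ => (hline t).hasDerivWithinAt)
    (by simp)
    (fun t _ => (hbound t).continuousAt.continuousWithinAt)
    (fun t _ => (hbound t).hasDerivWithinAt)
    (fun t ht => hf.inner_gradient_add_smul_le x v ht.1) (Set.right_mem_Icc.2 zero_le_one)
  simpa using hle

lemma apply_sub_smul_le (hf : IsLSmooth L f) (x g : E) (α : ℝ) :
    f (x - α • g) ≤ f x
      - α / 2 * (‖gradient f x‖ ^ 2 + ‖g‖ ^ 2 - ‖g - gradient f x‖ ^ 2)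
      + L / 2 * α ^ 2 * ‖g‖ ^ 2 := by
  have hdescent := hf.apply_add_le x (-(α • g))
  rw [← sub_eq_add_neg, inner_neg_right, real_inner_smul_right, norm_neg, norm_smul, mul_pow,
    Real.norm_eq_abs, sq_abs, real_inner_comm] at hdescent
  rw [norm_sub_sq_real]
  linarith

lemma le_of_strongConvex [Nontrivial E] (hf : IsLSmooth L f)
    (hsc : ∀ y z, f y + ⟪gradient f y, z - y⟫ + μ / 2 * ‖z - y‖ ^ 2 ≤ f z) : μ ≤ L := by
  obtain ⟨v, hv⟩ := exists_norm_eq E zero_le_one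
  have hlower := hsc 0 v
  have hupper := hf.apply_add_le 0 v
  rw [sub_zero, hv] at hlower
  rw [zero_add, hv] at hupper
  linarith

end IsLSmooth

lemma PolyakLojasiewicz.of_strongConvex (hμ : 0 ≤ μ)
    (hsc : ∀ y z, f y + ⟪gradient f y, z - y⟫ + μ / 2 * ‖z - y‖ ^ 2 ≤ f z) (xstar : E) :
    PolyakLojasiewicz μ (f xstar) f := by
  intro y
  have hsquare : 0 ≤ ‖gradient f y‖ ^ 2 + 2 * (μ * ⟪gradient f y, xstar - y⟫)
      + (μ * ‖xstar - y‖) ^ 2 := by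
    have hnonneg := sq_nonneg ‖gradient f y + μ • (xstar - y)‖
    rwa [norm_add_sq_real, real_inner_smul_right, norm_smul, Real.norm_of_nonneg hμ] at hnonneg
  linarith [mul_le_mul_of_nonneg_left (hsc y xstar) hμ]

end Smooth

section Average

variable {ι E : Type*} [Fintype ι]

lemma norm_inv_card_smul_sum_le [Nonempty ι] [SeminormedAddCommGroup E] [NormedSpace ℝ E]
    {u : ι → E} {c : ℝ} (hu : ∀ i, ‖u i‖ ≤ c) : ‖(Fintype.card ι : ℝ)⁻¹ • ∑ i, u i‖ ≤ c := by
  rw [norm_smul, norm_inv, Real.norm_natCast, inv_mul_le_iff₀ (by positivity)]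
  simpa using norm_sum_le_of_le Finset.univ fun i _ => hu i

variable [NormedAddCommGroup E] [InnerProductSpace ℝ E] [CompleteSpace E]
  {fi : ι → E → ℝ} {f : E → ℝ} {L : ℝ}

lemma hasGradientAt_of_eq_average (hfi : ∀ i, Differentiable ℝ (fi i))
    (hf : ∀ z, f z = (∑ i, fi i z) / Fintype.card ι) (z : E) :
    HasGradientAt f ((Fintype.card ι : ℝ)⁻¹ • ∑ i, gradient (fi i) z) z := by
  have hfun : f = fun y => (Fintype.card ι : ℝ)⁻¹ • ∑ i, fi i y := by
    funext y; rw [hf, smul_eq_mul, div_eq_inv_mul]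
  rw [hasGradientAt_iff_hasFDerivAt, hfun, map_smul, map_sum]
  exact (HasFDerivAt.fun_sum fun i _ => (hfi i z).hasGradientAt.hasFDerivAt).const_smul
    (Fintype.card ι : ℝ)⁻¹

lemma gradient_of_eq_average (hfi : ∀ i, Differentiable ℝ (fi i))
    (hf : ∀ z, f z = (∑ i, fi i z) / Fintype.card ι) (z : E) :
    gradient f z = (Fintype.card ι : ℝ)⁻¹ • ∑ i, gradient (fi i) z :=
  (hasGradientAt_of_eq_average hfi hf z).gradient

lemma IsLSmooth.of_eq_average [Nonempty ι] (hfi : ∀ i, IsLSmooth L (fi i))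
    (hf : ∀ z, f z = (∑ i, fi i z) / Fintype.card ι) : IsLSmooth L f where
  differentiable z :=
    (hasGradientAt_of_eq_average (fun i => (hfi i).differentiable) hf z).differentiableAt
  norm_gradient_sub_le y z := by
    have hgrad := gradient_of_eq_average (fun i => (hfi i).differentiable) hf
    rw [hgrad, hgrad, ← smul_sub, ← Finset.sum_sub_distrib]
    exact norm_inv_card_smul_sum_le fun i => (hfi i).norm_gradient_sub_le y z

end Average

section Window

variable {a : ℕ → ℝ}

/-- The sum of the `τ` entries of `a` preceding index `k`; for `k < τ` truncated subtraction makes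
the missing entries count as `a 0`. -/
def windowSum (τ : ℕ) (a : ℕ → ℝ) (k : ℕ) : ℝ :=
  ∑ j ∈ Finset.Icc 1 τ, a (k - j)

/-- The sum of the `τ` entries of `a` preceding index `k`, weighted linearly from `τ` for the most
recent one down to `1` for the oldest. Applied to `‖g ·‖ ^ 2`, this is the paper's `W_k`. -/
def weightedWindowSum (τ : ℕ) (a : ℕ → ℝ) (k : ℕ) : ℝ :=
  ∑ j ∈ Finset.Icc 1 τ, ((τ : ℝ) - j + 1) * a (k - j)

lemma weightedWindowSum_nonneg (ha : ∀ i, 0 ≤ a i) (τ k : ℕ) : 0 ≤ weightedWindowSum τ a k := by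
  refine Finset.sum_nonneg fun j hj => mul_nonneg ?_ (ha _)
  have hjτ : (j : ℝ) ≤ τ := by exact_mod_cast (Finset.mem_Icc.1 hj).2
  linarith

lemma weightedWindowSum_le_mul_windowSum (ha : ∀ i, 0 ≤ a i) (τ k : ℕ) :
    weightedWindowSum τ a k ≤ τ * windowSum τ a k := by
  rw [weightedWindowSum, windowSum, Finset.mul_sum]
  refine Finset.sum_le_sum fun j hj => mul_le_mul_of_nonneg_right ?_ (ha _)
  have hj1 : (1 : ℝ) ≤ j := by exact_mod_cast (Finset.mem_Icc.1 hj).1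
  linarith

lemma weightedWindowSum_succ (τ : ℕ) (a : ℕ → ℝ) (k : ℕ) :
    weightedWindowSum τ a (k + 1) = weightedWindowSum τ a k - windowSum τ a k + τ * a k := by
  have hIcc (F : ℕ → ℝ) : ∑ j ∈ Finset.Icc 1 τ, F j = ∑ i ∈ Finset.range τ, F (i + 1) := by
    rw [Finset.range_eq_Ico, Finset.sum_Ico_add' F 0 τ 1]; rfl
  have htelescope := Finset.sum_range_sub' (fun i : ℕ => ((τ : ℝ) - i) * a (k - i)) τ
  simp only [weightedWindowSum, windowSum, hIcc, Nat.add_sub_add_right]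
  rw [← Finset.sum_sub_distrib, ← sub_eq_iff_eq_add', ← Finset.sum_sub_distrib]
  convert htelescope using 1
  · refine Finset.sum_congr rfl fun i _ => ?_
    push_cast; ring
  · simp

lemma sq_windowSum_le (τ : ℕ) (a : ℕ → ℝ) (k : ℕ) :
    windowSum τ a k ^ 2 ≤ τ * windowSum τ (fun i => a i ^ 2) k := by
  simpa [windowSum] using sq_sum_le_card_mul_sum_sq (s := Finset.Icc 1 τ) (f := fun j => a (k - j))

lemma sq_le_of_le_mul_windowSum {b r : ℝ} {τ k : ℕ} (hb : 0 ≤ b) (hle : b ≤ r * windowSum τ a k) :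
    b ^ 2 ≤ r ^ 2 * (τ * windowSum τ (fun i => a i ^ 2) k) :=
  calc b ^ 2 ≤ (r * windowSum τ a k) ^ 2 := by gcongr
    _ = r ^ 2 * windowSum τ a k ^ 2 := mul_pow ..
    _ ≤ r ^ 2 * (τ * windowSum τ (fun i => a i ^ 2) k) := by gcongr; exact sq_windowSum_le τ a k

lemma sum_Ico_le_windowSum (ha : ∀ i, 0 ≤ a i) {τ j k : ℕ} (hj : k - τ ≤ j) :
    ∑ i ∈ Finset.Ico j k, a i ≤ windowSum τ a k :=
  calc ∑ i ∈ Finset.Ico j k, a i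
      = ∑ m ∈ Finset.Icc 1 (k - j), a (k - m) :=
        Finset.sum_nbij' (k - ·) (k - ·) (by grind) (by grind) (by grind) (by grind) (by grind)
    _ ≤ windowSum τ a k :=
        Finset.sum_le_sum_of_subset_of_nonneg (Finset.Icc_subset_Icc_right (by lia))
          fun _ _ _ => ha _

lemma norm_sub_le_mul_windowSum {E : Type*} [SeminormedAddCommGroup E] [NormedSpace ℝ E]
    {x g : ℕ → E} {α : ℝ} (hα : 0 ≤ α) (hx : ∀ k, x (k + 1) = x k - α • g k) {τ j k : ℕ}
    (hkj : k - τ ≤ j) (hjk : j ≤ k) :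
    ‖x j - x k‖ ≤ α * windowSum τ (fun i => ‖g i‖) k := by
  have hstep (i : ℕ) : dist (x i) (x (i + 1)) ≤ α * ‖g i‖ := by
    rw [hx, dist_self_sub_right, norm_smul, Real.norm_of_nonneg hα]
  calc ‖x j - x k‖ = dist (x j) (x k) := (dist_eq_norm _ _).symm
    _ ≤ ∑ i ∈ Finset.Ico j k, α * ‖g i‖ := dist_le_Ico_sum_of_dist_le hjk fun _ _ => hstep _
    _ = α * ∑ i ∈ Finset.Ico j k, ‖g i‖ := (Finset.mul_sum ..).symm
    _ ≤ α * windowSum τ (fun i => ‖g i‖) k := by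
        gcongr; exact sum_Ico_le_windowSum (fun _ => norm_nonneg _) hkj

end Window

section DelayedDescent

variable {E : Type*} {f : E → ℝ} {L μ α c : ℝ} {τ k : ℕ} {x g : ℕ → E}

/-- The Lyapunov function `V_k`, with suboptimality measured relative to the value `c`. -/
def delayLyapunov [Norm E] (f : E → ℝ) (c L α : ℝ) (τ : ℕ) (x g : ℕ → E) (k : ℕ) : ℝ :=
  f (x k) - c + L * α ^ 2 * weightedWindowSum τ (fun i => ‖g i‖ ^ 2) k

lemma delayLyapunov_nonneg [Norm E] (hL : 0 ≤ L) (hc : c ≤ f (x k)) :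
    0 ≤ delayLyapunov f c L α τ x g k :=
  add_nonneg (sub_nonneg.2 hc)
    (mul_nonneg (by positivity) (weightedWindowSum_nonneg (fun _ => sq_nonneg _) τ k))

variable [NormedAddCommGroup E] [InnerProductSpace ℝ E] [CompleteSpace E]

lemma delayLyapunov_succ_le (hf : IsLSmooth L f) (hPL : PolyakLojasiewicz μ c f)
    (hL : 0 ≤ L) (hμL : μ ≤ L) (hα : 0 ≤ α) (hτ : 1 ≤ τ) (hstep : 3 * (L * α * τ) ≤ 1)
    (hx : x (k + 1) = x k - α • g k)
    (herr : ‖g k - gradient f (x k)‖ ≤ 2 * (L * α) * windowSum τ (fun i => ‖g i‖) k) :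
    delayLyapunov f c L α τ x g (k + 1) ≤ (1 - α * μ) * delayLyapunov f c L α τ x g k := by
  have hsq : ∀ i, 0 ≤ ‖g i‖ ^ 2 := fun _ => sq_nonneg _
  have hdescent := hf.apply_sub_smul_le (x k) (g k) α
  have hPLk := mul_le_mul_of_nonneg_left (hPL (x k)) hα
  have herrsq := mul_le_mul_of_nonneg_left (sq_le_of_le_mul_windowSum (norm_nonneg _) herr) hα
  have hW0 := weightedWindowSum_nonneg hsq τ k
  have hWG := weightedWindowSum_le_mul_windowSum hsq τ k
  have hG0 : 0 ≤ windowSum τ (fun i => ‖g i‖ ^ 2) k := Finset.sum_nonneg fun _ _ => hsq _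
  rw [delayLyapunov, delayLyapunov, weightedWindowSum_succ, hx]
  set G := windowSum τ (fun i => ‖g i‖ ^ 2) k
  set W := weightedWindowSum τ (fun i => ‖g i‖ ^ 2) k
  have hmemory : α * μ * (L * α ^ 2 * W) ≤ L * α * τ * (L * α ^ 2 * G) :=
    calc α * μ * (L * α ^ 2 * W) ≤ α * L * (L * α ^ 2 * (τ * G)) := by gcongr
      _ = L * α * τ * (L * α ^ 2 * G) := by ring
  have hrelease : 3 * (L * α * τ) * (L * α ^ 2 * G) ≤ 1 * (L * α ^ 2 * G) := by gcongr
  have hcharge : 3 * (L * α * τ) * (α * ‖g k‖ ^ 2) ≤ 1 * (α * ‖g k‖ ^ 2) := by gcongr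
  have hsingle : L * α ^ 2 * ‖g k‖ ^ 2 * 1 ≤ L * α ^ 2 * ‖g k‖ ^ 2 * τ := by
    gcongr; exact_mod_cast hτ
  linarith

end DelayedDescent

section SAGA

variable {ι E : Type*} [Fintype ι] [DecidableEq ι]
  [NormedAddCommGroup E] [InnerProductSpace ℝ E] [CompleteSpace E]
  {fi : ι → E → ℝ} {f : E → ℝ} {L μ α c : ℝ} {idx : ℕ → ι} {x g : ℕ → E} {h : ι → ℕ → E} {τ k : ℕ}

/-- The update rules of SAGA with step size `α` and sampled indices `idx`: `x` are the iterates, `g`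
the directions and `h i k` the gradient stored for component `i` before iteration `k`. The initial
iterate and the initial table are arbitrary. -/
structure IsSAGATrajectory (fi : ι → E → ℝ) (idx : ℕ → ι) (α : ℝ) (x g : ℕ → E) (h : ι → ℕ → E) :
    Prop where
  stored_succ : ∀ i k, h i (k + 1) = if idx k = i then gradient (fi i) (x k) else h i k
  direction : ∀ k, g k = (Fintype.card ι : ℝ)⁻¹ • (∑ i, h i k)
    + (gradient (fi (idx k)) (x k) - h (idx k) k)
  iterate_succ : ∀ k, x (k + 1) = x k - α • g k

namespace IsSAGATrajectory

lemma exists_stored_eq_gradient (hrun : IsSAGATrajectory fi idx α x g h) {i : ι} {m : ℕ}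
    (hsampled : ∃ j, m ≤ j ∧ j < k ∧ idx j = i) :
    ∃ j, m ≤ j ∧ j < k ∧ h i k = gradient (fi i) (x j) := by
  induction k with
  | zero => simp at hsampled
  | succ k ih =>
    obtain ⟨j, hmj, hjk, hj⟩ := hsampled
    by_cases hk : idx k = i
    · exact ⟨k, by lia, by lia, by rw [hrun.stored_succ, if_pos hk]⟩
    · have hjk' : j ≠ k := by rintro rfl; exact hk hj
      obtain ⟨l, hml, hlk, hl⟩ := ih ⟨j, hmj, by lia, hj⟩
      exact ⟨l, hml, by lia, by rw [hrun.stored_succ, if_neg hk, hl]⟩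

lemma norm_stored_sub_gradient_le (hrun : IsSAGATrajectory fi idx α x g h) {i : ι}
    (hfi : IsLSmooth L (fi i)) (hL : 0 ≤ L) (hα : 0 ≤ α)
    (hstale : ∃ j, k - τ ≤ j ∧ j < k ∧ idx j = i) :
    ‖h i k - gradient (fi i) (x k)‖ ≤ L * (α * windowSum τ (fun i => ‖g i‖) k) := by
  obtain ⟨j, hkj, hjk, hj⟩ := hrun.exists_stored_eq_gradient hstale
  calc ‖h i k - gradient (fi i) (x k)‖
      = ‖gradient (fi i) (x j) - gradient (fi i) (x k)‖ := by rw [hj]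
    _ ≤ L * ‖x j - x k‖ := hfi.norm_gradient_sub_le _ _
    _ ≤ L * (α * windowSum τ (fun i => ‖g i‖) k) := by
        gcongr; exact norm_sub_le_mul_windowSum hα hrun.iterate_succ hkj hjk.le

lemma direction_sub_gradient (hrun : IsSAGATrajectory fi idx α x g h)
    (hfi : ∀ i, Differentiable ℝ (fi i)) (hf : ∀ z, f z = (∑ i, fi i z) / Fintype.card ι) (k : ℕ) :
    g k - gradient f (x k)
      = (Fintype.card ι : ℝ)⁻¹ • ∑ i, (h i k - gradient (fi i) (x k))
        - (h (idx k) k - gradient (fi (idx k)) (x k)) := by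
  rw [hrun.direction, gradient_of_eq_average hfi hf, Finset.sum_sub_distrib, smul_sub]
  abel

lemma norm_direction_sub_gradient_le (hrun : IsSAGATrajectory fi idx α x g h)
    (hfi : ∀ i, IsLSmooth L (fi i)) (hf : ∀ z, f z = (∑ i, fi i z) / Fintype.card ι)
    (hL : 0 ≤ L) (hα : 0 ≤ α) (hstale : ∀ i, ∃ j, k - τ ≤ j ∧ j < k ∧ idx j = i) :
    ‖g k - gradient f (x k)‖ ≤ 2 * (L * α) * windowSum τ (fun i => ‖g i‖) k := by
  have : Nonempty ι := ⟨idx k⟩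
  have hstored (i : ι) := hrun.norm_stored_sub_gradient_le (hfi i) hL hα (hstale i)
  rw [hrun.direction_sub_gradient (fun i => (hfi i).differentiable) hf, mul_assoc, mul_assoc,
    two_mul]
  exact norm_sub_le_of_le (norm_inv_card_smul_sum_le hstored) (hstored (idx k))

end IsSAGATrajectory

theorem saga_lyapunov_contraction_general (hfi : ∀ i, IsLSmooth L (fi i))
    (hf : ∀ z, f z = (∑ i, fi i z) / Fintype.card ι) (hPL : PolyakLojasiewicz μ c f)
    (hL : 0 ≤ L) (hμL : μ ≤ L) (hα : 0 ≤ α) (hτ : 1 ≤ τ) (hstep : 3 * (L * α * τ) ≤ 1)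
    (hrun : IsSAGATrajectory fi idx α x g h)
    (hstale : ∀ i, ∃ j, k - τ ≤ j ∧ j < k ∧ idx j = i) :
    delayLyapunov f c L α τ x g (k + 1) ≤ (1 - α * μ) * delayLyapunov f c L α τ x g k :=
  have : Nonempty ι := ⟨idx k⟩
  delayLyapunov_succ_le (.of_eq_average hfi hf) hPL hL hμL hα hτ hstep (hrun.iterate_succ k)
    (hrun.norm_direction_sub_gradient_le hfi hf hL hα hstale)

end SAGA

/- STATEMENT 7 (SAGA one-step Lyapunov contraction, strongly convex case). -/
theorem saga_lyapunov_contraction (d N : ℕ) (hd : 1 ≤ d) (hN : 1 ≤ N)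
    (L μ : ℝ) (hL : 0 < L) (hμ : 0 < μ)
    (fi : Fin N → EuclideanSpace ℝ (Fin d) → ℝ)
    (hdiff : ∀ i, Differentiable ℝ (fi i))
    (hsmooth : ∀ i x y, ‖gradient (fi i) x - gradient (fi i) y‖ ≤ L * ‖x - y‖)
    (f : EuclideanSpace ℝ (Fin d) → ℝ)
    (hf : ∀ z, f z = (∑ i, fi i z) / N)
    (hsc : ∀ y z, f y + ⟪gradient f y, z - y⟫ + μ / 2 * ‖z - y‖ ^ 2 ≤ f z)
    (xstar : EuclideanSpace ℝ (Fin d)) (hmin : ∀ y, f xstar ≤ f y)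
    (τ K : ℕ) (hτ : 1 ≤ τ) (hK : τ + 1 < K)
    (idx : ℕ → Fin N) (α : ℝ) (hα : α = 1 / (16 * L * τ))
    (x g : ℕ → EuclideanSpace ℝ (Fin d))
    (h : Fin N → ℕ → EuclideanSpace ℝ (Fin d))
    (hx0 : x 0 = 0)
    (hh0 : ∀ i, h i 0 = 0)
    (hhrec : ∀ i k, h i (k + 1) = if idx k = i then gradient (fi i) (x k) else h i k)
    (hg : ∀ k, g k = (N : ℝ)⁻¹ • (∑ i, h i k)
      + (gradient (fi (idx k)) (x k) - h (idx k) k))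
    (hxrec : ∀ k, x (k + 1) = x k - α • g k)
    (hstale : ∀ i : Fin N, ∀ k : ℕ, τ ≤ k → k ≤ K - 1 →
      ∃ j : ℕ, k - τ ≤ j ∧ j < k ∧ idx j = i)
    (V : ℕ → ℝ)
    (hV : ∀ k, V k = f (x k) - f xstar
      + L * α ^ 2 * ∑ j ∈ Finset.Icc 1 τ, ((τ : ℝ) - j + 1) * ‖g (k - j)‖ ^ 2) :
    ∀ k : ℕ, τ ≤ k → k ≤ K - 2 → V (k + 1) ≤ (1 - α * μ / 4) * V k := by
  intro k hk hkK
  have : Nonempty (Fin N) := ⟨idx 0⟩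
  have : NeZero d := ⟨by lia⟩
  have hα0 : 0 ≤ α := by rw [hα]; positivity
  have hstep : L * α * τ = 1 / 16 := by rw [hα]; field_simp
  have hfi (i : Fin N) : IsLSmooth L (fi i) := ⟨hdiff i, hsmooth i⟩
  have havg : ∀ z, f z = (∑ i, fi i z) / Fintype.card (Fin N) := by simpa using hf
  have hrun : IsSAGATrajectory fi idx α x g h := ⟨hhrec, by simpa using hg, hxrec⟩
  have hVk : 0 ≤ V k := hV k ▸ delayLyapunov_nonneg hL.le (hmin (x k))
  have hcontract : V (k + 1) ≤ (1 - α * μ) * V k := by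
    rw [hV, hV]
    exact saga_lyapunov_contraction_general hfi havg (.of_strongConvex hμ.le hsc xstar) hL.le
      (IsLSmooth.of_eq_average hfi havg |>.le_of_strongConvex hsc) hα0 hτ (by linarith) hrun
      fun i => hstale i k hk (by lia)
  have hrate : 0 ≤ α * μ * V k := by positivity
  linarith
end

section
/- Fix an integer τ ≥ 1 and set α = 1/(16 L τ). For any sampling sequence, the SAG Lyapunov function at the end of the burn-in period satisfies V_τ ≤ 3 L B². -/
/-!
Everything happens near the starting point `x₀`. Each `∇fᵢ` is `L`-Lipschitz and vanishes within
distance `B` of `x₀`, so on the ball of radius `B / 15` around `x₀` it is at most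
`M = (16 / 15) L B`. The SAG direction is the average of the updated gradient memory, hence also at
most `M` as long as the iterates stay in that ball; and `τ` steps of length `α M` with
`16 L τ α ≤ 1` cover a distance of at most `B / 15`, so the first `τ` iterates never leave it. The
mean value inequality on the ball of radius `B`, where the gradients are at most `2 L B`, then
bounds the suboptimality by `2 L B · (16 / 15) B`, and the window sum contributes at most
`L (α τ M)² ≤ L B² / 225`.
-/

open Metric

section Average

variable {ι E : Type*} [Fintype ι] [Nonempty ι] [SeminormedAddCommGroup E] [NormedSpace ℝ E]

theorem norm_inv_card_smul_sum_le_s12 {v : ι → E} {M : ℝ} (hv : ∀ i, ‖v i‖ ≤ M) :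
    ‖(Fintype.card ι : ℝ)⁻¹ • ∑ i, v i‖ ≤ M := by
  rw [norm_smul, norm_inv, Real.norm_natCast, inv_mul_le_iff₀ (by positivity)]
  simpa using norm_sum_le_of_le Finset.univ fun i _ => hv i

theorem sum_div_card_sub_sum_div_card_le {a b : ι → ℝ} {C : ℝ} (hab : ∀ i, a i - b i ≤ C) :
    (∑ i, a i) / Fintype.card ι - (∑ i, b i) / Fintype.card ι ≤ C := by
  rw [← sub_div, ← Finset.sum_sub_distrib, div_le_iff₀ (by positivity), mul_comm]
  simpa using Finset.sum_le_card_nsmul Finset.univ _ C fun i _ => hab i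

end Average

theorem norm_le_of_lipschitz_of_eq_zero {E F : Type*} [SeminormedAddCommGroup E]
    [SeminormedAddCommGroup F] {G : E → F} {L R B : ℝ} {c a y : E} (hL : 0 ≤ L)
    (hG : ∀ u v, ‖G u - G v‖ ≤ L * ‖u - v‖) (hGa : G a = 0)
    (ha : a ∈ closedBall c B) (hy : y ∈ closedBall c R) : ‖G y‖ ≤ L * (R + B) := by
  have hya : ‖y - a‖ ≤ R + B := by
    rw [← dist_eq_norm]
    exact (dist_triangle_right y a c).trans (add_le_add hy ha)
  calc ‖G y‖ = ‖G y - G a‖ := by rw [hGa, sub_zero]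
    _ ≤ L * ‖y - a‖ := hG y a
    _ ≤ L * (R + B) := by gcongr

section Gradient

variable {E : Type*} [NormedAddCommGroup E] [InnerProductSpace ℝ E] [CompleteSpace E]

theorem gradient_eq_zero_of_isLocalMin {φ : E → ℝ} {a : E} (ha : IsLocalMin φ a) :
    gradient φ a = 0 := by
  rw [gradient, ha.fderiv_eq_zero, map_zero]

theorem sub_le_of_norm_gradient_le {φ : E → ℝ} {s : Set E} {C : ℝ} {x y : E}
    (hφ : ∀ z ∈ s, DifferentiableAt ℝ φ z) (hC : ∀ z ∈ s, ‖gradient φ z‖ ≤ C)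
    (hs : Convex ℝ s) (hx : x ∈ s) (hy : y ∈ s) : φ x - φ y ≤ C * ‖x - y‖ := by
  have hfderiv : ∀ z ∈ s, ‖fderiv ℝ φ z‖ ≤ C := fun z hz => by
    simpa only [gradient, LinearIsometryEquiv.norm_map] using hC z hz
  exact (le_abs_self _).trans (hs.norm_image_sub_le_of_norm_fderiv_le hφ hfderiv hy hx)

theorem sub_le_of_lipschitz_gradient_of_critical {φ : E → ℝ} {L R B : ℝ} {p c u y : E} (hL : 0 ≤ L)
    (hφ : Differentiable ℝ φ) (hsmooth : ∀ u v, ‖gradient φ u - gradient φ v‖ ≤ L * ‖u - v‖)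
    (hcrit : gradient φ c = 0) (hc : c ∈ closedBall p B) (hRB : R ≤ B)
    (hu : u ∈ closedBall p R) (hy : y ∈ closedBall p B) :
    φ u - φ y ≤ L * (B + B) * (R + B) := by
  have hB : 0 ≤ B := dist_nonneg.trans hy
  have hgrad : ∀ z ∈ closedBall p B, ‖gradient φ z‖ ≤ L * (B + B) := fun z hz =>
    norm_le_of_lipschitz_of_eq_zero hL hsmooth hcrit hc hz
  calc φ u - φ y ≤ L * (B + B) * ‖u - y‖ :=
        sub_le_of_norm_gradient_le (fun z _ => hφ z) hgrad (convex_closedBall p B)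
          (closedBall_subset_closedBall hRB hu) hy
    _ ≤ L * (B + B) * (R + B) := by
      rw [← dist_eq_norm]
      gcongr
      exact (dist_triangle_right u y p).trans (add_le_add hu hy)

end Gradient

theorem sum_weight_mul_norm_sq_le {E : Type*} [SeminormedAddGroup E] {g : ℕ → E} {M : ℝ} {τ : ℕ}
    (hg : ∀ k < τ, ‖g k‖ ≤ M) :
    ∑ j ∈ Finset.Icc 1 τ, ((τ : ℝ) - j + 1) * ‖g (τ - j)‖ ^ 2 ≤ (τ * M) ^ 2 := by
  have hterm : ∀ j ∈ Finset.Icc 1 τ, ((τ : ℝ) - j + 1) * ‖g (τ - j)‖ ^ 2 ≤ τ * M ^ 2 := by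
    intro j hj
    obtain ⟨h1j, hjτ⟩ := Finset.mem_Icc.1 hj
    have hweight : (τ : ℝ) - j + 1 ≤ τ := by
      have : (1 : ℝ) ≤ j := mod_cast h1j
      linarith
    have hnorm : ‖g (τ - j)‖ ≤ M := hg _ (by omega)
    gcongr
  calc _ ≤ (Finset.Icc 1 τ).card • (τ * M ^ 2) := Finset.sum_le_card_nsmul _ _ _ hterm
    _ = (τ * M) ^ 2 := by
      rw [Nat.card_Icc, Nat.add_sub_cancel, nsmul_eq_mul]
      ring

/-- A run of stochastic average gradient descent for the vector fields `G i`, the gradients of the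
components: at step `k` the component `idx k` is sampled at the iterate `x k`, `h i k` is the value
of `G i` stored before that step (`0` if `i` was never sampled), and `g k` is the direction taken
with step size `α`. The starting point `x 0` is arbitrary. -/
structure IsSAGRun {ι E : Type*} [Fintype ι] [DecidableEq ι] [AddCommGroup E] [Module ℝ E]
    (G : ι → E → E) (idx : ℕ → ι) (α : ℝ) (x g : ℕ → E) (h : ι → ℕ → E) : Prop where
  memory_zero : ∀ i, h i 0 = 0
  memory_succ : ∀ i k, h i (k + 1) = if idx k = i then G i (x k) else h i k
  direction : ∀ k, g k = (Fintype.card ι : ℝ)⁻¹ • (∑ i, h i k)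
    + (Fintype.card ι : ℝ)⁻¹ • (G (idx k) (x k) - h (idx k) k)
  iterate_succ : ∀ k, x (k + 1) = x k - α • g k

namespace IsSAGRun

theorem direction_eq_average {ι E : Type*} [Fintype ι] [DecidableEq ι] [AddCommGroup E]
    [Module ℝ E] {G : ι → E → E} {idx : ℕ → ι} {α : ℝ} {x g : ℕ → E} {h : ι → ℕ → E}
    (run : IsSAGRun G idx α x g h) (k : ℕ) :
    g k = (Fintype.card ι : ℝ)⁻¹ • ∑ i, h i (k + 1) := by
  have hupdate : ∀ i, h i (k + 1) = h i k + if idx k = i then G i (x k) - h i k else 0 := by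
    intro i
    rw [run.memory_succ]
    split_ifs <;> simp
  simp [run.direction, hupdate, Finset.sum_add_distrib]

variable {ι E : Type*} [Fintype ι] [DecidableEq ι] [SeminormedAddCommGroup E] [NormedSpace ℝ E]
  {G : ι → E → E} {idx : ℕ → ι} {α M R : ℝ} {x g : ℕ → E} {h : ι → ℕ → E}

theorem norm_memory_le (run : IsSAGRun G idx α x g h) (hM : 0 ≤ M) {k : ℕ}
    (hG : ∀ j < k, ‖G (idx j) (x j)‖ ≤ M) (i : ι) : ‖h i k‖ ≤ M := by
  induction k with
  | zero => simpa [run.memory_zero] using hM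
  | succ k ih =>
    rw [run.memory_succ]
    split_ifs with hi
    · exact hi ▸ hG k k.lt_succ_self
    · exact ih fun j hj => hG j (hj.trans k.lt_succ_self)

theorem norm_direction_le (run : IsSAGRun G idx α x g h) (hM : 0 ≤ M) {k : ℕ}
    (hG : ∀ j ≤ k, ‖G (idx j) (x j)‖ ≤ M) : ‖g k‖ ≤ M := by
  have : Nonempty ι := ⟨idx 0⟩
  rw [run.direction_eq_average]
  exact norm_inv_card_smul_sum_le_s12
    (run.norm_memory_le hM fun j hj => hG j (Nat.lt_succ_iff.1 hj))

theorem dist_iterate_zero_le (run : IsSAGRun G idx α x g h) (hα : 0 ≤ α) {k : ℕ}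
    (hg : ∀ j < k, ‖g j‖ ≤ M) : dist (x k) (x 0) ≤ k * (α * M) := by
  have hstep : ∀ {j}, j < k → dist (x j) (x (j + 1)) ≤ α * M := fun {j} hj => by
    rw [run.iterate_succ, dist_self_sub_right, norm_smul, Real.norm_of_nonneg hα]
    gcongr
    exact hg j hj
  simpa [dist_comm] using dist_le_range_sum_of_dist_le k hstep

theorem iterate_mem_closedBall (run : IsSAGRun G idx α x g h) (hα : 0 ≤ α) (hM : 0 ≤ M) {τ : ℕ}
    (hG : ∀ i, ∀ y ∈ closedBall (x 0) R, ‖G i y‖ ≤ M) (hR : τ * (α * M) ≤ R) {k : ℕ}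
    (hk : k ≤ τ) : x k ∈ closedBall (x 0) R := by
  induction k using Nat.strong_induction_on with
  | h k ih =>
    have hg : ∀ j < k, ‖g j‖ ≤ M := fun j hj => run.norm_direction_le hM fun m hm =>
      hG _ _ (ih m (hm.trans_lt hj) ((hm.trans_lt hj).le.trans hk))
    calc dist (x k) (x 0) ≤ k * (α * M) := run.dist_iterate_zero_le hα hg
      _ ≤ τ * (α * M) := by gcongr
      _ ≤ R := hR

end IsSAGRun

theorem sag_burn_in_lyapunov_general {ι E : Type*} [Fintype ι] [DecidableEq ι]
    [NormedAddCommGroup E] [InnerProductSpace ℝ E] [CompleteSpace E] {L B α : ℝ} (hL : 0 ≤ L)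
    {fi : ι → E → ℝ} (hdiff : ∀ i, Differentiable ℝ (fi i))
    (hsmooth : ∀ i x y, ‖gradient (fi i) x - gradient (fi i) y‖ ≤ L * ‖x - y‖)
    {f : E → ℝ} (hf : ∀ z, f z = (∑ i, fi i z) / Fintype.card ι)
    {idx : ℕ → ι} {x g : ℕ → E} {h : ι → ℕ → E}
    (run : IsSAGRun (fun i => gradient (fi i)) idx α x g h)
    {y : E} (hy : y ∈ closedBall (x 0) B)
    {c : ι → E} (hc : ∀ i, c i ∈ closedBall (x 0) B) (hcrit : ∀ i, gradient (fi i) (c i) = 0)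
    {τ : ℕ} (hα : 0 ≤ α) (hατ : 16 * L * τ * α ≤ 1) :
    f (x τ) - f y
      + L * α ^ 2 * ∑ j ∈ Finset.Icc 1 τ, ((τ : ℝ) - j + 1) * ‖g (τ - j)‖ ^ 2
      ≤ 3 * L * B ^ 2 := by
  have hB : 0 ≤ B := dist_nonneg.trans hy
  set M := L * (B / 15 + B) with hM
  have hM0 : 0 ≤ M := by positivity
  have hgrad : ∀ i, ∀ z ∈ closedBall (x 0) (B / 15), ‖gradient (fi i) z‖ ≤ M := fun i z hz =>
    norm_le_of_lipschitz_of_eq_zero hL (hsmooth i) (hcrit i) (hc i) hz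
  have htravel : τ * (α * M) ≤ B / 15 := by
    calc τ * (α * M) = 16 * L * τ * α * (B / 15) := by rw [hM]; ring
      _ ≤ B / 15 := mul_le_of_le_one_left (by positivity) hατ
  have hx : ∀ k ≤ τ, x k ∈ closedBall (x 0) (B / 15) := fun k hk =>
    run.iterate_mem_closedBall hα hM0 hgrad htravel hk
  have hsubopt : f (x τ) - f y ≤ L * (B + B) * (B / 15 + B) := by
    have : Nonempty ι := ⟨idx 0⟩
    rw [hf, hf]
    exact sum_div_card_sub_sum_div_card_le fun i => sub_le_of_lipschitz_gradient_of_critical hL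
      (hdiff i) (hsmooth i) (hcrit i) (hc i) (by linarith) (hx τ le_rfl) hy
  have hg : ∀ k < τ, ‖g k‖ ≤ M := fun k hk =>
    run.norm_direction_le hM0 fun j hj => hgrad _ _ (hx j (hj.trans hk.le))
  have hwindow : L * α ^ 2 * ∑ j ∈ Finset.Icc 1 τ, ((τ : ℝ) - j + 1) * ‖g (τ - j)‖ ^ 2
      ≤ L * (B / 15) ^ 2 := by
    calc _ ≤ L * α ^ 2 * (τ * M) ^ 2 := by gcongr; exact sum_weight_mul_norm_sq_le hg
      _ = L * (τ * (α * M)) ^ 2 := by ring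
      _ ≤ L * (B / 15) ^ 2 := by gcongr
  have : 0 ≤ L * B ^ 2 := by positivity
  linarith

theorem sag_burn_in_lyapunov (d N : ℕ) (hd : 1 ≤ d) (hN : 1 ≤ N) (L : ℝ) (hL : 0 < L)
    (fi : Fin N → EuclideanSpace ℝ (Fin d) → ℝ)
    (hdiff : ∀ i, Differentiable ℝ (fi i))
    (hsmooth : ∀ i x y, ‖gradient (fi i) x - gradient (fi i) y‖ ≤ L * ‖x - y‖)
    (f : EuclideanSpace ℝ (Fin d) → ℝ)
    (hf : ∀ z, f z = (∑ i, fi i z) / N)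
    (xstar : EuclideanSpace ℝ (Fin d)) (hmin : ∀ y, f xstar ≤ f y)
    (xistar : Fin N → EuclideanSpace ℝ (Fin d))
    (hxi : ∀ i y, fi i (xistar i) ≤ fi i y)
    (B : ℝ) (hB : B = max ‖xstar‖ (⨆ i, ‖xistar i‖))
    (τ : ℕ) (hτ : 1 ≤ τ)
    (idx : ℕ → Fin N) (α : ℝ) (hα : α = 1 / (16 * L * τ))
    (x g : ℕ → EuclideanSpace ℝ (Fin d))
    (h : Fin N → ℕ → EuclideanSpace ℝ (Fin d))
    (hx0 : x 0 = 0)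
    (hh0 : ∀ i, h i 0 = 0)
    (hhrec : ∀ i k, h i (k + 1) = if idx k = i then gradient (fi i) (x k) else h i k)
    (hg : ∀ k, g k = (N : ℝ)⁻¹ • (∑ i, h i k)
      + (N : ℝ)⁻¹ • (gradient (fi (idx k)) (x k) - h (idx k) k))
    (hxrec : ∀ k, x (k + 1) = x k - α • g k) :
    f (x τ) - f xstar
      + L * α ^ 2 * ∑ j ∈ Finset.Icc 1 τ, ((τ : ℝ) - j + 1) * ‖g (τ - j)‖ ^ 2
      ≤ 3 * L * B ^ 2 := by
  subst hB hα
  exact sag_burn_in_lyapunov_general hL.le hdiff hsmooth (by simpa using hf)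
    ⟨hh0, hhrec, by simpa using hg, hxrec⟩ (by simp [hx0])
    (fun i => by simpa [hx0] using .inr (Finite.le_ciSup (fun i => ‖xistar i‖) i))
    (fun i => gradient_eq_zero_of_isLocalMin (.of_forall (hxi i)))
    (by positivity) (by field_simp; rfl)
end
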